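/- arXiv:cs/0207060 — 3 statements merged into one kernel-verified Lean document; each statement's English description precedes it below -/
import Mathlib

section
/- For any extended logic program Π, the operator A_Π = C_Π∘C_Π is monotonic: for all sets of literals X₁, X₂, if X₁ ⊆ X₂ then A_Π(X₁) ⊆ A_Π(X₂); consequently A_Π possesses a least fixpoint and a greatest fixpoint. -/
open scoped Classical

/-- A literal: an atom `A` or its classical negation `¬A`. -/
inductive Lit (α : Type) : Type
  | pos : α → Lit α
  | neg : α → Lit α

/-- A rule with a head literal and finite positive and negative bodies. -/
structure Rule (α : Type) where
  head : Lit α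
  pbody : Finset (Lit α)
  nbody : Finset (Lit α)

/-- A program is a set of rules (finiteness is stated as a hypothesis). -/
abbrev Program (α : Type) := Set (Rule α)

/-- `X` is consistent if it contains no complementary pair. -/
def Consistent {α : Type} (X : Set (Lit α)) : Prop :=
  ¬ ∃ A : α, Lit.pos A ∈ X ∧ Lit.neg A ∈ X

/-- `X` is logically closed if it is consistent or equals the set of all literals. -/
def LogClosed {α : Type} (X : Set (Lit α)) : Prop :=
  Consistent X ∨ X = Set.univ

/-- `X` is closed under (basic) program `P`. -/
def ClosedUnder {α : Type} (P : Program α) (X : Set (Lit α)) : Prop :=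
  ∀ r ∈ P, ↑r.pbody ⊆ X → r.head ∈ X

/-- `Cn P` : the smallest logically closed set closed under basic program `P`. -/
def Cn {α : Type} (P : Program α) : Set (Lit α) :=
  ⋂₀ {X | LogClosed X ∧ ClosedUnder P X}

/-- The reduct of `P` relative to `X`. -/
def reduct {α : Type} (P : Program α) (X : Set (Lit α)) : Program α :=
  {s | ∃ r ∈ P, (↑r.nbody ∩ X = (∅ : Set (Lit α))) ∧ s = ⟨r.head, r.pbody, ∅⟩}

/-- A program is basic if all its rules have empty negative body. -/
def IsBasic {α : Type} (P : Program α) : Prop := ∀ r ∈ P, r.nbody = ∅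

/-- `C_Π(X) = Cn(Π^X)`. -/
noncomputable def Cop {α : Type} (P : Program α) (X : Set (Lit α)) : Set (Lit α) :=
  Cn (reduct P X)

/-- `A_Π(X) = C_Π(C_Π(X))`. -/
noncomputable def Aop {α : Type} (P : Program α) (X : Set (Lit α)) : Set (Lit α) :=
  Cop P (Cop P X)

/-- `X` is an answer set of `P` iff `Cn(P^X) = X`. -/
def AnswerSet {α : Type} (P : Program α) (X : Set (Lit α)) : Prop :=
  Cn (reduct P X) = X

/-- Immediate consequence operator for a basic program. -/
noncomputable def T {α : Type} (P : Program α) (X : Set (Lit α)) : Set (Lit α) :=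
  if Consistent X then {L | ∃ r ∈ P, ↑r.pbody ⊆ X ∧ L = r.head} else Set.univ

/-- `r` is active wrt `(X, Y)`. -/
def Active {α : Type} (r : Rule α) (X Y : Set (Lit α)) : Prop :=
  ↑r.pbody ⊆ X ∧ ↑r.nbody ∩ Y = (∅ : Set (Lit α))

/-- Extended immediate consequence operator `T_{Π,Y}(X)`. -/
noncomputable def TE {α : Type} (P : Program α) (Y X : Set (Lit α)) : Set (Lit α) :=
  if Consistent X then {L | ∃ r ∈ P, Active r X Y ∧ L = r.head} else Set.univ

/-- Preference-sensitive operator `T_{(Π,<),Y}(X)` (Definition 1). -/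
noncomputable def TP {α : Type} (P : Program α) (lt : Rule α → Rule α → Prop)
    (Y X : Set (Lit α)) : Set (Lit α) :=
  if Consistent X then
    {L | ∃ r ∈ P, Active r X Y ∧
      (¬ ∃ r' ∈ P, lt r r' ∧ Active r' Y X ∧ r'.head ∉ X) ∧ L = r.head}
  else Set.univ

/-- `C_{(Π,<)}(X)` (Definition 2). -/
noncomputable def CP {α : Type} (P : Program α) (lt : Rule α → Rule α → Prop)
    (X : Set (Lit α)) : Set (Lit α) :=
  ⋃ i : ℕ, (TP P lt X)^[i] ∅

/-- `A_{(Π,<)}(X) = C_{(Π,<)}(C_{(Π,<)}(X))`. -/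
noncomputable def AP {α : Type} (P : Program α) (lt : Rule α → Rule α → Prop)
    (X : Set (Lit α)) : Set (Lit α) :=
  CP P lt (CP P lt X)

/-- The set `D^r_{(X,Y)}` of removable literals. -/
def D {α : Type} (P : Program α) (lt : Rule α → Rule α → Prop) (r : Rule α)
    (X Y : Set (Lit α)) : Set (Lit α) :=
  {L | ∀ r' ∈ P, r'.head = L → ↑r'.pbody ⊆ Y →
      lt r' r ∧ ({r.head} ∪ X) ∩ ↑r'.nbody ≠ (∅ : Set (Lit α))}

/-- `T°_{(Π,<),Y}(X)` (Definition 3). -/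
noncomputable def TN {α : Type} (P : Program α) (lt : Rule α → Rule α → Prop)
    (Y X : Set (Lit α)) : Set (Lit α) :=
  if Consistent X then
    {L | ∃ r ∈ P, Active r X (Y \ D P lt r X Y) ∧ L = r.head}
  else Set.univ

/-- `C°_{(Π,<)}(X)` (Definition 4). -/
noncomputable def CN {α : Type} (P : Program α) (lt : Rule α → Rule α → Prop)
    (X : Set (Lit α)) : Set (Lit α) :=
  ⋃ i : ℕ, (TN P lt X)^[i] ∅

/-- `A°_{(Π,<)}(X) = C°_{(Π,<)}(C_Π(X))`. -/
noncomputable def AN {α : Type} (P : Program α) (lt : Rule α → Rule α → Prop)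
    (X : Set (Lit α)) : Set (Lit α) :=
  CN P lt (Cop P X)

section

variable {α : Type}

theorem ClosedUnder.anti {P Q : Program α} {X : Set (Lit α)} (hPQ : P ⊆ Q)
    (hX : ClosedUnder Q X) : ClosedUnder P X :=
  fun r hr => hX r (hPQ hr)

theorem Cn_monotone : Monotone (Cn : Program α → Set (Lit α)) :=
  fun _ _ hPQ => Set.sInter_subset_sInter fun _ hX => ⟨hX.1, hX.2.anti hPQ⟩

theorem reduct_antitone (P : Program α) : Antitone (reduct P) := by
  rintro X Y hXY _ ⟨r, hr, hdisj, rfl⟩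
  exact ⟨r, hr, Set.subset_eq_empty (Set.inter_subset_inter_right _ hXY) hdisj, rfl⟩

theorem Cop_antitone (P : Program α) : Antitone (Cop P) :=
  Cn_monotone.comp_antitone (reduct_antitone P)

theorem Aop_monotone (P : Program α) : Monotone (Aop P) :=
  (Cop_antitone P).comp (Cop_antitone P)

theorem Aop_monotone_lfp_gfp_general (P : Program α) :
    (∀ X₁ X₂ : Set (Lit α), X₁ ⊆ X₂ → Aop P X₁ ⊆ Aop P X₂) ∧
    (∃ L : Set (Lit α), Aop P L = L ∧ ∀ Z, Aop P Z = Z → L ⊆ Z) ∧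
    (∃ G : Set (Lit α), Aop P G = G ∧ ∀ Z, Aop P Z = Z → Z ⊆ G) := by
  let A : Set (Lit α) →o Set (Lit α) := ⟨Aop P, Aop_monotone P⟩
  exact ⟨fun _ _ hX => Aop_monotone P hX,
    ⟨A.lfp, A.map_lfp, fun _ hZ => A.isLeast_lfp.2 hZ⟩,
    ⟨A.gfp, A.map_gfp, fun _ hZ => A.isGreatest_gfp.2 hZ⟩⟩

end

/-- `A_Π = C_Π ∘ C_Π` is monotonic, hence has a least and a
greatest fixpoint. -/
theorem Aop_monotone_lfp_gfp {α : Type} (P : Program α) (hfin : P.Finite) :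
    (∀ X₁ X₂ : Set (Lit α), X₁ ⊆ X₂ → Aop P X₁ ⊆ Aop P X₂) ∧
    (∃ L : Set (Lit α), Aop P L = L ∧ ∀ Z, Aop P Z = Z → L ⊆ Z) ∧
    (∃ G : Set (Lit α), Aop P G = G ∧ ∀ Z, Aop P Z = Z → Z ⊆ G) :=
  Aop_monotone_lfp_gfp_general P
end

section
/- For any extended logic program Π and any answer set X of Π, it holds that X = ∪_{i≥0} T^i_{Π^X}(∅), where Π^X is the reduct of Π relative to X. -/
open scoped Classical

/-!
The logically closed sets closed under a basic program `P` are exactly the prefixed points of `T P`: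
on an inconsistent set `T P` takes the value `Lit`, which forces an inconsistent prefixed point to
be `Lit`. Hence `Cn P` is the least fixed point of `T P`. Whether a literal belongs to `T P X` is
witnessed by a finite part of `X`, namely the positive body of a rule or a complementary pair, so
`T P` is Scott continuous and Kleene's theorem computes its least fixed point by iteration from `∅`.
-/

theorem scottContinuous_of_monotone_of_exists_finset {β γ : Type*} {f : Set β → Set γ}
    (hf : Monotone f)
    (hfinset : ∀ X, ∀ c ∈ f X, ∃ s : Finset β, ↑s ⊆ X ∧ c ∈ f s) : ScottContinuous f := by
  intro d hne hdir X hX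
  refine ⟨hf.mem_upperBounds_image hX.1, fun Y hY c hc ↦ ?_⟩
  obtain ⟨s, hsX, hcs⟩ := hfinset X c hc
  have hs : (s : Set β) ⊆ ⋃₀ d := hsX.trans (hX.2 fun _ ↦ Set.subset_sUnion_of_mem)
  obtain ⟨Z, hZ, hsZ⟩ :=
    hdir.exists_mem_subset_of_finite_of_subset_sUnion hne s.finite_toSet hs
  exact hY (Set.mem_image_of_mem f hZ) (hf hsZ hcs)

section ImmediateConsequence

variable {α : Type} {P : Program α} {X Y : Set (Lit α)} {L : Lit α}

theorem Consistent.mono (hY : Consistent Y) (hXY : X ⊆ Y) : Consistent X :=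
  fun ⟨A, hpos, hneg⟩ ↦ hY ⟨A, hXY hpos, hXY hneg⟩

theorem mem_T : L ∈ T P X ↔ ¬ Consistent X ∨ ∃ r ∈ P, ↑r.pbody ⊆ X ∧ L = r.head := by
  by_cases hX : Consistent X <;> simp [T, hX]

theorem monotone_T (P : Program α) : Monotone (T P) := by
  intro X Y hXY L hL
  rw [mem_T] at hL ⊢
  exact hL.imp (mt fun hY ↦ hY.mono hXY) fun ⟨r, hr, hbody, hL⟩ ↦ ⟨r, hr, hbody.trans hXY, hL⟩

theorem T_subset_self_iff : T P X ⊆ X ↔ LogClosed X ∧ ClosedUnder P X := by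
  constructor
  · intro hT
    refine ⟨or_iff_not_imp_left.2 fun hX ↦ ?_, fun r hr hbody ↦ ?_⟩
    · exact Set.eq_univ_of_forall fun L ↦ hT (mem_T.2 (.inl hX))
    · exact hT (mem_T.2 (.inr ⟨r, hr, hbody, rfl⟩))
  · rintro ⟨hlog, hclosed⟩ L hL
    rcases mem_T.1 hL with hX | ⟨r, hr, hbody, rfl⟩
    · exact hlog.resolve_left hX ▸ Set.mem_univ L
    · exact hclosed r hr hbody

theorem exists_finset_subset_mem_T (hL : L ∈ T P X) :
    ∃ s : Finset (Lit α), ↑s ⊆ X ∧ L ∈ T P s := by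
  rcases mem_T.1 hL with hX | ⟨r, hr, hbody, hhead⟩
  · obtain ⟨A, hpos, hneg⟩ := not_not.1 hX
    refine ⟨{.pos A, .neg A}, ?_, mem_T.2 (.inl fun hs ↦ hs ⟨A, ?_, ?_⟩)⟩
    · simp [Set.insert_subset_iff, hpos, hneg]
    · simp
    · simp
  · exact ⟨r.pbody, hbody, mem_T.2 (.inr ⟨r, hr, subset_rfl, hhead⟩)⟩

theorem scottContinuous_T (P : Program α) : ScottContinuous (T P) :=
  scottContinuous_of_monotone_of_exists_finset (monotone_T P) fun _ _ ↦ exists_finset_subset_mem_T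

theorem Cn_eq_lfp_T (P : Program α) : Cn P = OrderHom.lfp ⟨T P, monotone_T P⟩ := by
  have hprefixed : {X | LogClosed X ∧ ClosedUnder P X} = {X | T P X ⊆ X} :=
    Set.ext fun _ ↦ T_subset_self_iff.symm
  rw [Cn, hprefixed]
  rfl

theorem Cn_eq_iUnion_iterate_T (P : Program α) : Cn P = ⋃ i : ℕ, (T P)^[i] ∅ :=
  (Cn_eq_lfp_T P).trans
    (fixedPoints.lfp_eq_sSup_iterate ⟨T P, monotone_T P⟩ (scottContinuous_T P).ωScottContinuous)

end ImmediateConsequence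

theorem answerSet_eq_iUnion_iterate_T_reduct_general {α : Type} (P : Program α)
    (X : Set (Lit α)) : AnswerSet P X ↔ X = ⋃ i : ℕ, (T (reduct P X))^[i] ∅ := by
  rw [AnswerSet, Cn_eq_iUnion_iterate_T, eq_comm]

/-- any answer set `X` of `Π` equals `⋃ i, T_{Π^X}^i(∅)`. -/
theorem answerSet_eq_iUnion_iterate_T_reduct {α : Type} (P : Program α)
    (hfin : P.Finite) (X : Set (Lit α)) (hX : AnswerSet P X) :
    X = ⋃ i : ℕ, (T (reduct P X))^[i] ∅ :=
  (answerSet_eq_iUnion_iterate_T_reduct_general P X).1 hX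
end

section
/- For any ordered logic program (Π,<), the operator C_{(Π,<)} is anti-monotonic: for all sets of literals X₁, X₂, if X₁ ⊆ X₂ then C_{(Π,<)}(X₂) ⊆ C_{(Π,<)}(X₁). -/
open scoped Classical

section

variable {α : Type} {P : Program α} {lt : Rule α → Rule α → Prop} {r : Rule α} {L : Lit α}
  {X X' Y Y' : Set (Lit α)}

theorem Consistent.subset (hX' : Consistent X') (hX : X ⊆ X') : Consistent X :=
  fun ⟨A, hpos, hneg⟩ => hX' ⟨A, hX hpos, hX hneg⟩

theorem Active.mono (hr : Active r X Y) (hX : X ⊆ X') (hY : Y' ⊆ Y) : Active r X' Y' :=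
  ⟨hr.1.trans hX, Set.subset_eq_empty (Set.inter_subset_inter_right _ hY) hr.2⟩

theorem mem_TP_iff :
    L ∈ TP P lt Y X ↔ (Consistent X → ∃ r ∈ P, Active r X Y ∧
      (¬ ∃ r' ∈ P, lt r r' ∧ Active r' Y X ∧ r'.head ∉ X) ∧ L = r.head) := by
  by_cases hX : Consistent X <;> simp [TP, hX]

/- Preferred rules block `r` by being active with respect to the swapped pair `(Y, X)`, so the
change of sets that preserves the activity of `r` can only destroy blockers. -/
theorem TP_subset_TP (hY : Y' ⊆ Y) (hX : X ⊆ X') : TP P lt Y X ⊆ TP P lt Y' X' := by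
  intro L hL
  refine mem_TP_iff.2 fun hX' => ?_
  obtain ⟨r, hrP, hr, hunblocked, rfl⟩ := mem_TP_iff.1 hL (hX'.subset hX)
  refine ⟨r, hrP, hr.mono hX hY, ?_, rfl⟩
  rintro ⟨r', hrP', hlt, hr', hhead⟩
  exact hunblocked ⟨r', hrP', hlt, hr'.mono hY hX, fun hmem => hhead (hX hmem)⟩

variable (P lt)

theorem TP_monotone (Y : Set (Lit α)) : Monotone (TP P lt Y) :=
  fun _ _ hX => TP_subset_TP subset_rfl hX

theorem TP_antitone : Antitone (TP P lt) :=
  fun _ _ hY _ => TP_subset_TP hY subset_rfl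

theorem CP_antimono_general : Antitone (CP P lt) := fun _ X₂ h =>
  Set.iUnion_mono fun i =>
    (TP_monotone P lt X₂).iterate_le_of_le (TP_antitone P lt h) i ∅

end

/-- `C_{(Π,<)}` is anti-monotonic. -/
theorem CP_antimono {α : Type} (P : Program α) (hfin : P.Finite)
    (lt : Rule α → Rule α → Prop)
    (hirr : ∀ r, ¬ lt r r) (htrans : ∀ r₁ r₂ r₃, lt r₁ r₂ → lt r₂ r₃ → lt r₁ r₃)
    (X₁ X₂ : Set (Lit α)) (h : X₁ ⊆ X₂) :
    CP P lt X₂ ⊆ CP P lt X₁ :=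
  CP_antimono_general P lt h
end
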